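/- arXiv:1802.04586 — 2 statements merged into one kernel-verified Lean document; each statement's English description precedes it below -/
import Mathlib

section
/- Let k ≥ 3, 1 ≤ ℓ ≤ k−1, a ≥ 1, 0 ≤ x ≤ k be integers, and set b = 2x + ℓ + (k−ℓ)a. Suppose 0 < ε ≤ ℓ/(2a) and 1/n ≪ γ, 1/a, 1/k. Let V be an n-vertex set, and let ℱ₁, …, ℱ_t be t ≤ n^{2k} families, each consisting of γ·n^b ordered b-subsets of V. If G = 𝔾^{(k)}(n,p) with p ≥ n^{−(k−ℓ)−ε}, then with probability at least 1 − exp(−n^{1/3}), for every i ∈ [t] at least (γ/2)·p^a·n^b members of ℱ_i span labeled copies of P_{a,x} in G. -/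
open Finset
open scoped Classical

/-- All `k`-subsets of `Fin n` (the possible edges of a `k`-graph on `n` vertices). -/
def kSets (n k : ℕ) : Finset (Finset (Fin n)) := Finset.univ.powersetCard k

/-- The probability that the binomial random `k`-graph `G^{(k)}(n,p)` (each `k`-set is an
edge independently with probability `p`) has an edge set satisfying the property `A`. -/
noncomputable def gProb (n k : ℕ) (p : ℝ) (A : Finset (Finset (Fin n)) → Prop) : ℝ :=
  ∑ E ∈ (kSets n k).powerset.filter (fun E => A E),
    p ^ E.card * (1 - p) ^ ((kSets n k).card - E.card)

/-- Expectation of a random variable `f` of the random `k`-graph `G^{(k)}(n,p)`. -/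
noncomputable def gExpect (n k : ℕ) (p : ℝ) (f : Finset (Finset (Fin n)) → ℝ) : ℝ :=
  ∑ E ∈ (kSets n k).powerset,
    p ^ E.card * (1 - p) ^ ((kSets n k).card - E.card) * f E

/-- The degree of a vertex set `S` in the `k`-graph with edge set `E`: the number of edges
containing `S` (equivalently, the number of `(k-|S|)`-sets `T` with `S ∪ T ∈ E`). -/
def degOf {n : ℕ} (E : Finset (Finset (Fin n))) (S : Finset (Fin n)) : ℕ :=
  (E.filter (fun e => S ⊆ e)).card

/-- The minimum vertex degree (minimum 1-degree) of a `k`-graph. -/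
noncomputable def minVertexDeg {n : ℕ} (E : Finset (Finset (Fin n))) : ℕ :=
  sInf {d : ℕ | ∃ v : Fin n, degOf E {v} = d}

/-- The index set of the `i`-th edge of the path `P_{a,x}`:
`{x + i*d, x + i*d + 1, …, x + i*d + k - 1}` (here `d = k - ℓ`). -/
def edgeIdx (k d x i : ℕ) : Finset ℕ := (Finset.range k).image (fun j => x + i * d + j)

/-- The ordered `b`-tuple `w` spans a labeled copy of `P_{a,x}` (the `k`-uniform `ℓ`-path
with `a` edges, preceded and followed by `x` isolated vertices) in the edge set `E`. -/
def SpansPax {n : ℕ} (k ℓ a x : ℕ) (E : Finset (Finset (Fin n))) {b : ℕ}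
    (w : Fin b → Fin n) : Prop :=
  Function.Injective w ∧
  ∀ i < a,
    ((Finset.univ.filter (fun m : Fin b => (m : ℕ) ∈ edgeIdx k (k - ℓ) x i)).image w) ∈ E

/-- The ordered tuple `w` spans a labeled copy of the `ℓ`-path `P_a` of length `a` in `E`. -/
def SpansPath {n : ℕ} (k ℓ a : ℕ) (E : Finset (Finset (Fin n))) {b : ℕ}
    (w : Fin b → Fin n) : Prop :=
  SpansPax k ℓ a 0 E w

/-- The first `ℓ`-end of the ordered tuple `w` (its first `ℓ` vertices, as a set). -/
def firstEnd {n b : ℕ} (ℓ : ℕ) (w : Fin b → Fin n) : Finset (Fin n) :=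
  (Finset.univ.filter (fun m : Fin b => (m : ℕ) < ℓ)).image w

/-- The last `ℓ`-end of the ordered tuple `w` (its last `ℓ` vertices, as a set). -/
def lastEnd {n b : ℕ} (ℓ : ℕ) (w : Fin b → Fin n) : Finset (Fin n) :=
  (Finset.univ.filter (fun m : Fin b => b - ℓ ≤ (m : ℕ))).image w

/-- The `k`-graph with edge set `E` on vertex set `Fin n` contains a Hamiltonian `ℓ`-cycle:
there is a cyclic ordering of all `n` vertices such that each of the `n/(k-ℓ)` edges
consists of `k` consecutive vertices, consecutive edges overlapping in `ℓ` vertices. -/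
def IsHamCycle (n k ℓ : ℕ) (E : Finset (Finset (Fin n))) : Prop :=
  ∃ f : ZMod n → Fin n, Function.Bijective f ∧
    ∀ i < n / (k - ℓ),
      ((Finset.range k).image (fun j => f (((i * (k - ℓ) + j : ℕ) : ZMod n)))) ∈ E

/-- The `ℓ`-shadow of a `k`-graph: all `ℓ`-sets contained in some edge. -/
def shadowL {n : ℕ} (ℓ : ℕ) (E : Finset (Finset (Fin n))) : Finset (Finset (Fin n)) :=
  (Finset.univ.powersetCard ℓ).filter (fun S => ∃ e ∈ E, S ⊆ e)

/-- The list `v` of vertices spans a copy of the `ℓ`-path `P_a` of length `a` in `E`. -/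
def ListSpans {n : ℕ} (k ℓ a : ℕ) (E : Finset (Finset (Fin n))) (v : List (Fin n)) : Prop :=
  v.Nodup ∧ v.length = a * (k - ℓ) + ℓ ∧
    ∀ i < a, ((v.drop (i * (k - ℓ))).take k).toFinset ∈ E

/-- `Φ_F(n,p) = min { n^{v_H} p^{e_H} : H ⊆ F, e_H > 0 }`, where the subgraph `H` is given
by a nonempty edge set `E' ⊆ F` together with a vertex set `W` containing all its edges. -/
noncomputable def Phi {V : Type*} (n : ℕ) (p : ℝ) (F : Finset (Finset V)) : ℝ :=
  sInf {r : ℝ | ∃ (W : Finset V) (E' : Finset (Finset V)),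
    E' ⊆ F ∧ E'.Nonempty ∧ (∀ e ∈ E', e ⊆ W) ∧ r = (n : ℝ) ^ W.card * p ^ E'.card}

/-- The ordered tuple `w` spans a labeled copy of the `k`-graph `F` (given by its edge set
`Fe` on vertex set `Fin s`) in the edge set `E`. -/
def SpansCopy {n s : ℕ} (Fe : Finset (Finset (Fin s))) (E : Finset (Finset (Fin n)))
    (w : Fin s → Fin n) : Prop :=
  ∀ e ∈ Fe, e.image w ∈ E

/-- Concatenation of three ordered tuples. -/
def concat3 {n p q r : ℕ} (A : Fin p → Fin n) (C : Fin q → Fin n) (B : Fin r → Fin n)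
    (m : Fin (p + q + r)) : Fin n :=
  if h : (m : ℕ) < p then A ⟨(m : ℕ), h⟩
  else if h2 : (m : ℕ) < p + q then C ⟨(m : ℕ) - p, by omega⟩
  else B ⟨(m : ℕ) - (p + q), by have := m.isLt; omega⟩

/-- `w`, spanning an `ℓ`-path of length `a`, is a `W`-absorber in `E`: it avoids `W`, and
its vertex set together with `W` spans an `ℓ`-path (of length `a+1` when `|W| = k - ℓ`)
with the same two `ℓ`-ends. -/
def IsAbsorber {n : ℕ} (k ℓ a : ℕ) (E : Finset (Finset (Fin n))) {b : ℕ}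
    (w : Fin b → Fin n) (W : Finset (Fin n)) : Prop :=
  (∀ m, w m ∉ W) ∧
  ∃ w' : Fin (b + W.card) → Fin n, SpansPath k ℓ (a + 1) E w' ∧
    Finset.image w' Finset.univ = Finset.image w Finset.univ ∪ W ∧
    firstEnd ℓ w' = firstEnd ℓ w ∧ lastEnd ℓ w' = lastEnd ℓ w


/-- expectation on random subsets of `S` -/
noncomputable def jEx {α : Type*} (S : Finset α) (p : ℝ) (f : Finset α → ℝ) : ℝ :=
  ∑ E ∈ S.powerset, p ^ E.card * (1 - p) ^ (S.card - E.card) * f E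

section janson
set_option linter.unusedSectionVars false
variable {α : Type*} [DecidableEq α]

lemma jEx_one (S : Finset α) (p : ℝ) : jEx S p (fun _ => 1) = 1 := by
  unfold jEx
  simp [Finset.sum_pow_mul_eq_add_pow]

lemma jEx_mono (S : Finset α) {p : ℝ} (hp : 0 ≤ p) (hp1 : p ≤ 1) {f g : Finset α → ℝ}
    (h : ∀ E, f E ≤ g E) : jEx S p f ≤ jEx S p g := by
  unfold jEx
  have : 0 ≤ 1 - p := by linarith
  exact Finset.sum_le_sum fun E _ => mul_le_mul_of_nonneg_left (h E) (by positivity)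

lemma jEx_sub (S : Finset α) (p : ℝ) (f g : Finset α → ℝ) :
    jEx S p (fun E => f E - g E) = jEx S p f - jEx S p g := by
  unfold jEx
  rw [← Finset.sum_sub_distrib]
  exact Finset.sum_congr rfl fun E _ => by ring

lemma jEx_mul (S : Finset α) (p c : ℝ) (f : Finset α → ℝ) :
    jEx S p (fun E => c * f E) = c * jEx S p f := by
  unfold jEx
  rw [Finset.mul_sum]
  exact Finset.sum_congr rfl fun E _ => by ring

lemma jEx_sum {ι : Type*} (T : Finset ι) (S : Finset α) (p : ℝ) (f : ι → Finset α → ℝ) :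
    jEx S p (fun E => ∑ i ∈ T, f i E) = ∑ i ∈ T, jEx S p (f i) := by
  unfold jEx
  rw [Finset.sum_comm]
  exact Finset.sum_congr rfl fun E _ => by rw [Finset.mul_sum]

lemma jEx_insert (S : Finset α) (p : ℝ) (e : α) (he : e ∉ S) (f : Finset α → ℝ) :
    jEx (insert e S) p f = (1 - p) * jEx S p f + p * jEx S p (fun E => f (insert e E)) := by
  unfold jEx
  rw [Finset.sum_powerset_insert he, Finset.mul_sum, Finset.mul_sum]
  congr 1
  · refine Finset.sum_congr rfl fun E hE => ?_
    have h1 := Finset.card_le_card (Finset.mem_powerset.1 hE)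
    rw [Finset.card_insert_of_notMem he, Nat.succ_sub h1, pow_succ]
    ring
  · refine Finset.sum_congr rfl fun E hE => ?_
    have h1 : e ∉ E := fun h => he (Finset.mem_powerset.1 hE h)
    rw [Finset.card_insert_of_notMem he, Finset.card_insert_of_notMem h1, Nat.add_sub_add_right]
    ring

lemma jEx_mem (S : Finset α) (p : ℝ) (e : α) (he : e ∈ S) (f : Finset α → ℝ) :
    jEx S p (fun E => if e ∈ E then f E else 0) = p * jEx S p (fun E => f (insert e E)) := by
  obtain ⟨S', hS', rfl⟩ : ∃ S', e ∉ S' ∧ insert e S' = S :=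
    ⟨S.erase e, by simp, Finset.insert_erase he⟩
  rw [jEx_insert _ _ _ hS', jEx_insert _ _ _ hS']
  have h0 : jEx S' p (fun E => if e ∈ E then f E else 0) = 0 := by
    unfold jEx
    refine Finset.sum_eq_zero fun E hE => ?_
    have h1 : e ∉ E := fun h => hS' (Finset.mem_powerset.1 hE h)
    simp [h1]
  rw [h0]
  simp only [Finset.mem_insert_self, if_true, Finset.insert_idem]
  ring

lemma jEx_subset (S : Finset α) (p : ℝ) (A : Finset α) (hA : A ⊆ S) (f : Finset α → ℝ) :
    jEx S p (fun E => if A ⊆ E then f E else 0) = p ^ A.card * jEx S p (fun E => f (E ∪ A)) := by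
  induction A using Finset.induction_on generalizing f with
  | empty => simp
  | insert e A he ih =>
    have h1 : e ∈ S := hA (Finset.mem_insert_self _ _)
    have h2 : A ⊆ S := fun y hy => hA (Finset.mem_insert_of_mem hy)
    have h3 : (fun E : Finset α => if insert e A ⊆ E then f E else 0)
        = (fun E => if e ∈ E then (if A ⊆ E then f E else 0) else 0) := by
      funext E
      simp only [Finset.insert_subset_iff]
      by_cases h : e ∈ E <;> simp [h]
    have h4 : (fun E : Finset α => if A ⊆ insert e E then f (insert e E) else 0)
        = (fun E => if A ⊆ E then f (insert e E) else 0) := by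
      funext E
      simp only [Finset.subset_insert_iff_of_notMem he]
    rw [h3, jEx_mem _ _ _ h1, h4, ih h2 (fun E => f (insert e E)), Finset.card_insert_of_notMem he]
    have h5 : (fun E : Finset α => f (insert e (E ∪ A))) = (fun E => f (E ∪ insert e A)) := by
      funext E
      rw [Finset.union_insert]
    rw [h5]
    ring

lemma jEx_harris [Fintype α] (S : Finset α) {p : ℝ} (hp : 0 ≤ p) (hp1 : p ≤ 1)
    {f g : Finset α → ℝ} (hf : Antitone f) (hg : Antitone g)
    (hf1 : ∀ E, f E ≤ 1) (hg1 : ∀ E, g E ≤ 1) :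
    jEx S p f * jEx S p g ≤ jEx S p (fun E => f E * g E) := by
  have hq : 0 ≤ 1 - p := by linarith
  set W : Finset α → ℝ := fun E =>
    if E ⊆ S then p ^ E.card * (1 - p) ^ (S.card - E.card) else 0 with hW
  have hJ : ∀ f : Finset α → ℝ, jEx S p f = ∑ E, W E * f E := by
    intro f
    unfold jEx
    rw [hW]
    simp only [ite_mul, zero_mul]
    rw [← Finset.sum_filter]
    refine Finset.sum_congr ?_ fun _ _ => rfl
    ext E; simp
  have hW0 : ∀ E, 0 ≤ W E := by
    intro E
    simp only [hW]
    split_ifs <;> positivity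
  have key := fkg (fun E => 1 - f E) (fun E => 1 - g E) W hW0
    (fun E => by simpa using hf1 E) (fun E => by simpa using hg1 E)
    (fun x y h => sub_le_sub_left (hf h) 1) (fun x y h => sub_le_sub_left (hg h) 1) (by
      intro A B
      by_cases hA : A ⊆ S
      · by_cases hB : B ⊆ S
        · have h1 : A ∩ B ⊆ S := fun y hy => hA (Finset.mem_inter.1 hy).1
          have h2 : A ∪ B ⊆ S := Finset.union_subset hA hB
          have e := Finset.card_union_add_card_inter A B
          have c1 := Finset.card_le_card hA
          have c2 := Finset.card_le_card hB
          have c3 := Finset.card_le_card h1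
          have c4 := Finset.card_le_card h2
          simp only [hW, Finset.inf_eq_inter, Finset.sup_eq_union, hA, hB, h1, h2, if_true]
          apply le_of_eq
          have e1 : p ^ A.card * p ^ B.card = p ^ (A ∩ B).card * p ^ (A ∪ B).card := by
            rw [← pow_add, ← pow_add]; congr 1; omega
          have e2 : (1-p) ^ (S.card - A.card) * (1-p) ^ (S.card - B.card)
             = (1-p) ^ (S.card - (A ∩ B).card) * (1-p) ^ (S.card - (A ∪ B).card) := by
            rw [← pow_add, ← pow_add]; congr 1; omega
          linear_combination (1-p) ^ (S.card - A.card) * (1-p) ^ (S.card - B.card) * e1 +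
            p ^ (A ∩ B).card * p ^ (A ∪ B).card * e2
        · have : W B = 0 := by simp [hW, hB]
          rw [this, mul_zero]; exact mul_nonneg (hW0 _) (hW0 _)
      · have : W A = 0 := by simp [hW, hA]
        rw [this, zero_mul]; exact mul_nonneg (hW0 _) (hW0 _))
  have h1 : ∑ E, W E = 1 := by
    have := hJ (fun _ => 1)
    rw [jEx_one] at this
    simpa using this.symm
  rw [h1, ← hJ, ← hJ, ← hJ, one_mul] at key
  have e3 : (fun E => (1 - f E) * (1 - g E)) = fun E => (1 - f E) - (g E - f E * g E) := by
    funext E; ring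
  rw [e3, jEx_sub, jEx_sub, jEx_sub, jEx_sub, jEx_one,
    jEx_sub S p g (fun E => f E * g E)] at key
  nlinarith

variable {ι : Type*}

/-- counting variable -/
noncomputable def jX (T : Finset ι) (A : ι → Finset α) (E : Finset α) : ℝ :=
  ∑ i ∈ T, if A i ⊆ E then 1 else 0

lemma jX_mono (T : Finset ι) (A : ι → Finset α) {E E' : Finset α} (h : E ⊆ E') :
    jX T A E ≤ jX T A E' := by
  unfold jX
  refine Finset.sum_le_sum fun i _ => ?_
  by_cases h1 : A i ⊆ E
  · simp [h1, h1.trans h]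
  · rw [if_neg h1]; split_ifs <;> norm_num

lemma jX_nonneg (T : Finset ι) (A : ι → Finset α) (E : Finset α) : 0 ≤ jX T A E :=
  Finset.sum_nonneg fun i _ => by split_ifs <;> norm_num

lemma janson_key [Fintype α] (S : Finset α) {p : ℝ} (hp : 0 ≤ p) (hp1 : p ≤ 1)
    (T : Finset ι) (A : ι → Finset α) (hA : ∀ i ∈ T, A i ⊆ S) (s : ℝ) (hs : 0 ≤ s)
    (i : ι) (hi : i ∈ T) :
    (p ^ (A i).card - s * ∑ j ∈ T with ¬ Disjoint (A i) (A j), p ^ (A i ∪ A j).card)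
      * jEx S p (fun E => Real.exp (-s * jX T A E)) ≤
    jEx S p (fun E => if A i ⊆ E then Real.exp (-s * jX T A E) else 0) := by
  rw [jEx_subset S p (A i) (hA i hi)]
  set Y : Finset α → ℝ := fun E => jX {j ∈ T | ¬ Disjoint (A i) (A j)} A (E ∪ A i) with hY
  set Z : Finset α → ℝ := fun E => jX {j ∈ T | Disjoint (A i) (A j)} A E with hZ
  have hsplit : ∀ E, jX T A (E ∪ A i) = Y E + Z E := by
    intro E
    have : Z E = jX {j ∈ T | Disjoint (A i) (A j)} A (E ∪ A i) := by
      simp only [hZ, jX]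
      refine Finset.sum_congr rfl fun j hj => ?_
      have hd := (Finset.mem_filter.1 hj).2
      have : A j ⊆ E ∪ A i ↔ A j ⊆ E := by
        constructor
        · intro h
          exact hd.symm.left_le_of_le_sup_right h
        · intro h; exact h.trans Finset.subset_union_left
      simp only [this]
    rw [this]
    simp only [hY, jX]
    rw [add_comm, Finset.sum_filter_add_sum_filter_not]
  have hexp : (fun E => Real.exp (-s * jX T A (E ∪ A i)))
      = fun E => Real.exp (-s * Y E) * Real.exp (-s * Z E) := by
    funext E
    rw [hsplit, ← Real.exp_add]; ring_nf
  rw [hexp]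
  have hle1 : ∀ y : ℝ, 0 ≤ y → Real.exp (-s * y) ≤ 1 := by
    intro y hy
    rw [Real.exp_le_one_iff]
    nlinarith [mul_nonneg hs hy]
  have H := jEx_harris S hp hp1 (f := fun E => Real.exp (-s * Y E))
    (g := fun E => Real.exp (-s * Z E))
    (fun E E' h => Real.exp_le_exp.2 (by
      have : Y E ≤ Y E' := jX_mono _ _ (Finset.union_subset_union_left h)
      nlinarith [mul_le_mul_of_nonneg_left this hs]))
    (fun E E' h => Real.exp_le_exp.2 (by
      have : Z E ≤ Z E' := jX_mono _ _ h
      nlinarith [mul_le_mul_of_nonneg_left this hs]))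
    (fun E => hle1 _ (jX_nonneg _ _ _)) (fun E => hle1 _ (jX_nonneg _ _ _))
  have hZX : jEx S p (fun E => Real.exp (-s * jX T A E)) ≤ jEx S p (fun E => Real.exp (-s * Z E)) := by
    refine jEx_mono S hp hp1 fun E => Real.exp_le_exp.2 ?_
    have : Z E ≤ jX T A E := by
      simp only [hZ, jX]
      exact Finset.sum_le_sum_of_subset_of_nonneg (Finset.filter_subset _ _)
        (fun _ _ _ => by split_ifs <;> norm_num)
    nlinarith [mul_le_mul_of_nonneg_left this hs]
  have hYl : 1 - s * jEx S p Y ≤ jEx S p (fun E => Real.exp (-s * Y E)) := by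
    have : 1 - s * jEx S p Y = jEx S p (fun E => 1 - s * Y E) := by
      rw [jEx_sub, jEx_one, jEx_mul]
    rw [this]
    refine jEx_mono S hp hp1 fun E => ?_
    have := Real.add_one_le_exp (-s * Y E)
    linarith
  have h0 : ∀ f : Finset α → ℝ, (∀ E, 0 ≤ f E) → 0 ≤ jEx S p f := by
    intro f hf
    have := jEx_mono S hp hp1 (f := fun _ => 0) (g := f) hf
    simpa [jEx] using this
  have hΔ : ∑ j ∈ T with ¬ Disjoint (A i) (A j), p ^ (A i ∪ A j).card
      = p ^ (A i).card * jEx S p Y := by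
    simp only [hY, jX]
    rw [jEx_sum, Finset.mul_sum]
    refine Finset.sum_congr rfl fun j hj => ?_
    have hj' := (Finset.mem_filter.1 hj).1
    rw [← jEx_subset S p (A i) (hA i hi) (fun E => if A j ⊆ E then 1 else 0)]
    have := jEx_subset S p (A i ∪ A j) (Finset.union_subset (hA i hi) (hA j hj')) (fun _ => 1)
    rw [jEx_one, mul_one] at this
    rw [← this]
    congr 1
    funext E
    simp only [Finset.union_subset_iff]
    by_cases h : A i ⊆ E <;> simp [h]
  rw [hΔ]
  have hpA : 0 ≤ p ^ (A i).card := pow_nonneg hp _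
  calc _ = p ^ (A i).card * ((1 - s * jEx S p Y) * jEx S p (fun E => Real.exp (-s * jX T A E))) := by ring
    _ ≤ p ^ (A i).card * (jEx S p (fun E => Real.exp (-s * Y E)) * jEx S p (fun E => Real.exp (-s * Z E))) := by
      refine mul_le_mul_of_nonneg_left ?_ hpA
      refine (mul_le_mul_of_nonneg_right hYl (h0 _ fun E => (Real.exp_pos _).le)).trans ?_
      exact mul_le_mul_of_nonneg_left hZX (h0 _ fun E => (Real.exp_pos _).le)
    _ ≤ _ := mul_le_mul_of_nonneg_left H hpA

lemma janson_laplace [Fintype α] (S : Finset α) {p : ℝ} (hp : 0 ≤ p) (hp1 : p ≤ 1)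
    (T : Finset ι) (A : ι → Finset α) (hA : ∀ i ∈ T, A i ⊆ S) (μ Δ : ℝ)
    (hμ : μ = ∑ i ∈ T, p ^ (A i).card)
    (hΔ : ∑ i ∈ T, ∑ j ∈ T with ¬ Disjoint (A i) (A j), p ^ (A i ∪ A j).card ≤ Δ)
    (s : ℝ) (hs : 0 ≤ s) :
    jEx S p (fun E => Real.exp (-s * jX T A E)) ≤ Real.exp (-(μ * s) + s ^ 2 * Δ / 2) := by
  set Φ : ℝ → ℝ := fun s => jEx S p (fun E => Real.exp (-s * jX T A E)) with hΦ
  have hΦpos : ∀ s, 0 ≤ Φ s := by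
    intro s
    have := jEx_mono S hp hp1 (f := fun _ => 0) (g := fun E => Real.exp (-s * jX T A E))
      (fun E => (Real.exp_pos _).le)
    simpa [jEx, hΦ] using this
  set Ψ : ℝ → ℝ := fun s => jEx S p (fun E => jX T A E * Real.exp (-s * jX T A E)) with hΨ
  have hder : ∀ s, HasDerivAt Φ (-Ψ s) s := by
    intro s
    simp only [hΦ, hΨ, jEx]
    rw [← Finset.sum_neg_distrib]
    refine HasDerivAt.fun_sum fun E _ => ?_
    have h1 : HasDerivAt (fun s : ℝ => -s * jX T A E) (-1 * jX T A E) s :=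
      (hasDerivAt_id s).neg.mul_const _
    exact ((h1.exp).const_mul (p ^ E.card * (1 - p) ^ (S.card - E.card))).congr_deriv (by ring)
  have hkey : ∀ s, 0 ≤ s → (μ - s * Δ) * Φ s ≤ Ψ s := by
    intro s hs
    have h1 : Ψ s = ∑ i ∈ T, jEx S p (fun E => if A i ⊆ E then Real.exp (-s * jX T A E) else 0) := by
      rw [← jEx_sum]
      simp only [hΨ]
      congr 1
      funext E
      generalize Real.exp (-s * jX T A E) = c
      rw [jX, Finset.sum_mul]
      exact Finset.sum_congr rfl fun i _ => by split_ifs <;> simp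
    rw [h1]
    refine le_trans ?_ (Finset.sum_le_sum fun i hi => janson_key S hp hp1 T A hA s hs i hi)
    rw [← Finset.sum_mul]
    refine mul_le_mul_of_nonneg_right ?_ (hΦpos s)
    rw [Finset.sum_sub_distrib, ← Finset.mul_sum, ← hμ]
    nlinarith [mul_le_mul_of_nonneg_left hΔ hs]
  set h : ℝ → ℝ := fun s => Φ s * Real.exp (μ * s - s ^ 2 * Δ / 2) with hh
  have hd : ∀ s, HasDerivAt h ((-Ψ s + (μ - s * Δ) * Φ s) * Real.exp (μ * s - s ^ 2 * Δ / 2)) s := by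
    intro s
    have h1 : HasDerivAt (fun s : ℝ => μ * s - s ^ 2 * Δ / 2) (μ - s * Δ) s := by
      have a1 := (hasDerivAt_id s).const_mul μ
      have a2 := (((hasDerivAt_id s).pow 2).mul_const Δ).div_const 2
      exact (a1.sub a2).congr_deriv (by simp; ring)
    exact ((hder s).mul h1.exp).congr_deriv (by ring)
  have hanti : AntitoneOn h (Set.Ici 0) := by
    refine antitoneOn_of_deriv_nonpos (convex_Ici 0)
      (fun s _ => (hd s).continuousAt.continuousWithinAt)
      (fun s _ => (hd s).differentiableAt.differentiableWithinAt) ?_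
    intro s hs
    rw [interior_Ici] at hs
    rw [(hd s).deriv]
    have := hkey s (le_of_lt hs)
    exact mul_nonpos_of_nonpos_of_nonneg (by linarith) (Real.exp_pos _).le
  have h0 : h 0 = 1 := by
    simp [hh, hΦ, jEx_one]
  have h2 := hanti (Set.mem_Ici.2 le_rfl) (Set.mem_Ici.2 hs) hs
  rw [h0] at h2
  have h3 : Real.exp (-(μ * s) + s ^ 2 * Δ / 2) = (Real.exp (μ * s - s ^ 2 * Δ / 2))⁻¹ := by
    rw [← Real.exp_neg]; ring_nf
  rw [h3, ← one_div, le_div_iff₀ (Real.exp_pos _)]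
  exact h2

lemma janson_tail [Fintype α] (S : Finset α) {p : ℝ} (hp : 0 ≤ p) (hp1 : p ≤ 1)
    (T : Finset ι) (A : ι → Finset α) (hA : ∀ i ∈ T, A i ⊆ S) (μ Δ : ℝ)
    (hμ : μ = ∑ i ∈ T, p ^ (A i).card)
    (hΔ : ∑ i ∈ T, ∑ j ∈ T with ¬ Disjoint (A i) (A j), p ^ (A i ∪ A j).card ≤ Δ)
    (hΔ0 : 0 < Δ) :
    jEx S p (fun E => if jX T A E < μ / 2 then 1 else 0) ≤ Real.exp (-(μ ^ 2 / (8 * Δ))) := by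
  have hμ0 : 0 ≤ μ := hμ ▸ Finset.sum_nonneg fun i _ => pow_nonneg hp _
  set s := μ / 2 / Δ with hs
  have hs0 : 0 ≤ s := by positivity
  have h1 := janson_laplace S hp hp1 T A hA μ Δ hμ hΔ s hs0
  have h2 : jEx S p (fun E => if jX T A E < μ / 2 then 1 else 0)
      ≤ jEx S p (fun E => Real.exp (s * (μ / 2)) * Real.exp (-s * jX T A E)) := by
    refine jEx_mono S hp hp1 fun E => ?_
    rw [← Real.exp_add]
    split_ifs with h
    · apply Real.one_le_exp
      nlinarith [mul_le_mul_of_nonneg_left h.le hs0]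
    · positivity
  rw [jEx_mul] at h2
  refine h2.trans ((mul_le_mul_of_nonneg_left h1 (Real.exp_pos _).le).trans ?_)
  rw [← Real.exp_add, Real.exp_le_exp, hs]
  apply le_of_eq
  field_simp
  ring

end janson

lemma mem_edgeIdx {k d x i m : ℕ} : m ∈ edgeIdx k d x i ↔ x + i * d ≤ m ∧ m < x + i * d + k := by
  unfold edgeIdx
  simp only [Finset.mem_image, Finset.mem_range]
  constructor
  · rintro ⟨j, hj, rfl⟩; omega
  · rintro ⟨h1, h2⟩; exact ⟨m - (x + i * d), by omega, by omega⟩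

lemma card_edgeIdx (k d x i : ℕ) : (edgeIdx k d x i).card = k := by
  have : edgeIdx k d x i = Finset.Ico (x + i * d) (x + i * d + k) := by
    ext m; simp [mem_edgeIdx]
  rw [this]; simp

lemma card_biUnion_edgeIdx (k ℓ x : ℕ) (hlk : ℓ ≤ k) (J : Finset ℕ) (hJ : J.Nonempty) :
    (k - ℓ) * J.card + ℓ ≤ (J.biUnion (edgeIdx k (k - ℓ) x)).card := by
  obtain ⟨d, rfl⟩ : ∃ d, k = d + ℓ := ⟨k - ℓ, by omega⟩
  rw [Nat.add_sub_cancel]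
  induction J using Finset.induction_on_max with
  | empty => exact absurd hJ (by simp)
  | insert m J hm ih =>
    have hmJ : m ∉ J := fun h => lt_irrefl _ (hm m h)
    rcases J.eq_empty_or_nonempty with rfl | hne
    · simp [card_edgeIdx]
    · have h1 := ih hne
      rw [Finset.card_insert_of_notMem hmJ]
      have hsub : J.biUnion (edgeIdx (d + ℓ) d x) ∪ Finset.Ico (x + m * d + ℓ) (x + m * d + ℓ + d)
          ⊆ (insert m J).biUnion (edgeIdx (d + ℓ) d x) := by
        rw [Finset.biUnion_insert]
        refine Finset.union_subset Finset.subset_union_right (fun y hy => ?_)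
        apply Finset.mem_union_left
        rw [mem_edgeIdx]
        rw [Finset.mem_Ico] at hy
        omega
      have hdis : Disjoint (J.biUnion (edgeIdx (d + ℓ) d x))
          (Finset.Ico (x + m * d + ℓ) (x + m * d + ℓ + d)) := by
        rw [Finset.disjoint_left]
        intro y hy hy'
        obtain ⟨i, hi, hyi⟩ := Finset.mem_biUnion.1 hy
        rw [mem_edgeIdx] at hyi
        rw [Finset.mem_Ico] at hy'
        have h2 : (i + 1) * d ≤ m * d := Nat.mul_le_mul_right _ (hm i hi)
        have h3 : (i + 1) * d = i * d + d := by ring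
        omega
      have := Finset.card_le_card hsub
      rw [Finset.card_union_of_disjoint hdis, Nat.card_Ico] at this
      have h4 : d * (J.card + 1) = d * J.card + d := by ring
      omega

/-- index set inside `Fin b` -/
def paxI (k ℓ x b i : ℕ) : Finset (Fin b) :=
  Finset.univ.filter (fun m : Fin b => (m : ℕ) ∈ edgeIdx k (k - ℓ) x i)

/-- edges of the path on `w` -/
def paxE {n b : ℕ} (k ℓ a x : ℕ) (w : Fin b → Fin n) : Finset (Finset (Fin n)) :=
  (Finset.range a).image (fun i => (paxI k ℓ x b i).image w)

lemma paxI_biUnion (k ℓ a x b : ℕ) (hb : b = 2 * x + ℓ + (k - ℓ) * a) (hlk : ℓ ≤ k)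
    (J : Finset ℕ) (hJ : J ⊆ Finset.range a) :
    (J.biUnion (paxI k ℓ x b)).card = (J.biUnion (edgeIdx k (k - ℓ) x)).card := by
  have : J.biUnion (edgeIdx k (k - ℓ) x) = (J.biUnion (paxI k ℓ x b)).map Fin.valEmbedding := by
    ext y
    simp only [Finset.mem_biUnion, Finset.mem_map, paxI, Finset.mem_filter, Finset.mem_univ,
      true_and, Fin.valEmbedding_apply]
    constructor
    · rintro ⟨i, hi, hy⟩
      have hia := Finset.mem_range.1 (hJ hi)
      have hy' := mem_edgeIdx.1 hy
      have h2 : (i + 1) * (k - ℓ) ≤ a * (k - ℓ) := Nat.mul_le_mul_right _ hia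
      have h3 : (i + 1) * (k - ℓ) = i * (k - ℓ) + (k - ℓ) := by ring
      have h4 : (k - ℓ) * a = a * (k - ℓ) := by ring
      exact ⟨⟨y, by omega⟩, ⟨i, hi, hy⟩, rfl⟩
    · rintro ⟨y, ⟨i, hi, hy⟩, rfl⟩
      exact ⟨i, hi, hy⟩
  rw [this, Finset.card_map]

lemma paxI_card (k ℓ a x b : ℕ) (hb : b = 2 * x + ℓ + (k - ℓ) * a) (hlk : ℓ ≤ k)
    (i : ℕ) (hi : i < a) : (paxI k ℓ x b i).card = k := by
  have := paxI_biUnion k ℓ a x b hb hlk {i} (by simpa using hi)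
  simpa [card_edgeIdx] using this

lemma paxI_inj (k ℓ a x b : ℕ) (hb : b = 2 * x + ℓ + (k - ℓ) * a) (hlk : ℓ < k)
    (i j : ℕ) (hi : i < a) (hj : j < a) (h : paxI k ℓ x b i = paxI k ℓ x b j) : i = j := by
  by_contra hne
  have h1 := paxI_biUnion k ℓ a x b hb hlk.le {i, j} (by
    intro y; simp; rintro (rfl | rfl) <;> assumption)
  have h2 := card_biUnion_edgeIdx k ℓ x hlk.le {i, j} (by simp)
  rw [← h1, Finset.card_pair hne] at h2
  simp only [Finset.biUnion_insert, Finset.singleton_biUnion, h, Finset.union_self] at h2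
  rw [paxI_card k ℓ a x b hb hlk.le j hj] at h2
  omega

lemma paxEdge_inj {n : ℕ} (k ℓ a x b : ℕ) (hb : b = 2 * x + ℓ + (k - ℓ) * a) (hlk : ℓ < k)
    (w : Fin b → Fin n) (hw : Function.Injective w) :
    Set.InjOn (fun i => (paxI k ℓ x b i).image w) (Finset.range a : Set ℕ) := by
  intro i hi j hj h
  simp only [Finset.coe_range, Set.mem_Iio] at hi hj
  exact paxI_inj k ℓ a x b hb hlk i j hi hj (Finset.image_injective hw h)

lemma paxE_card {n : ℕ} (k ℓ a x b : ℕ) (hb : b = 2 * x + ℓ + (k - ℓ) * a) (hlk : ℓ < k)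
    (w : Fin b → Fin n) (hw : Function.Injective w) : (paxE k ℓ a x w).card = a := by
  unfold paxE
  rw [Finset.card_image_of_injOn (paxEdge_inj k ℓ a x b hb hlk w hw), Finset.card_range]

lemma paxE_subset {n : ℕ} (k ℓ a x b : ℕ) (hb : b = 2 * x + ℓ + (k - ℓ) * a) (hlk : ℓ < k)
    (w : Fin b → Fin n) (hw : Function.Injective w) : paxE k ℓ a x w ⊆ kSets n k := by
  intro e he
  obtain ⟨i, hi, rfl⟩ := Finset.mem_image.1 he
  unfold kSets
  rw [Finset.mem_powersetCard]
  refine ⟨Finset.subset_univ _, ?_⟩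
  rw [Finset.card_image_of_injective _ hw, paxI_card k ℓ a x b hb hlk.le i (Finset.mem_range.1 hi)]

lemma spansPax_iff {n : ℕ} (k ℓ a x b : ℕ) (E : Finset (Finset (Fin n)))
    (w : Fin b → Fin n) (hw : Function.Injective w) :
    SpansPax k ℓ a x E w ↔ paxE k ℓ a x w ⊆ E := by
  unfold SpansPax paxE paxI
  rw [Finset.image_subset_iff]
  simp [hw]

lemma count_tuples {n b : ℕ} (w : Fin b → Fin n) (U : Finset (Fin b)) (hb : 1 ≤ b) :
    (Finset.univ.filter (fun w' : Fin b → Fin n => ∀ m ∈ U, w' m ∈ Finset.univ.image w)).card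
      ≤ b ^ b * n ^ (b - U.card) := by
  have h1 : (Finset.univ.filter (fun w' : Fin b → Fin n => ∀ m ∈ U, w' m ∈ Finset.univ.image w))
      ⊆ Fintype.piFinset (fun m => if m ∈ U then Finset.univ.image w else Finset.univ) := by
    intro w' hw'
    rw [Fintype.mem_piFinset]
    intro m
    split_ifs with h
    · exact (Finset.mem_filter.1 hw').2 m h
    · simp
  refine (Finset.card_le_card h1).trans ?_
  rw [Fintype.card_piFinset]
  calc _ ≤ ∏ m : Fin b, (if m ∈ U then b else n) := by
        refine Finset.prod_le_prod' fun m _ => ?_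
        split_ifs
        · exact Finset.card_image_le.trans (by simp)
        · simp
    _ = b ^ U.card * n ^ (b - U.card) := by
        rw [Finset.prod_ite, Finset.prod_const, Finset.prod_const]
        congr 2
        · simp
        · rw [Finset.filter_not, Finset.card_sdiff_of_subset (Finset.filter_subset _ _)]
          simp
    _ ≤ _ := by
        refine Nat.mul_le_mul_right _ (Nat.pow_le_pow_right hb ?_)
        simpa using Finset.card_le_univ U

lemma phi_bound {k ℓ a : ℕ} (hl1 : 1 ≤ ℓ) (hlk : ℓ ≤ k) (ha : 1 ≤ a) {ε p : ℝ} (hε0 : 0 < ε)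
    (hε : ε ≤ (ℓ : ℝ) / (2 * (a : ℝ))) {n : ℕ} (hn : 1 ≤ n)
    (hp : (n : ℝ) ^ (-((k : ℝ) - (ℓ : ℝ)) - ε) ≤ p) {j v : ℕ} (hja : j ≤ a)
    (hv : (k - ℓ) * j + ℓ ≤ v) :
    (n : ℝ) ^ ((1 : ℝ) / 2) ≤ (n : ℝ) ^ v * p ^ j := by
  have hn1 : (1 : ℝ) ≤ n := by exact_mod_cast hn
  have hn0 : (0 : ℝ) < n := by linarith
  have hp0 : 0 < p := lt_of_lt_of_le (Real.rpow_pos_of_pos hn0 _) hp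
  have ha' : (1 : ℝ) ≤ a := by exact_mod_cast ha
  have hl' : (1 : ℝ) ≤ ℓ := by exact_mod_cast hl1
  have hja' : (j : ℝ) ≤ a := by exact_mod_cast hja
  have h1 : (n : ℝ) ^ (((k - ℓ) * j + ℓ : ℕ) : ℝ) ≤ (n : ℝ) ^ v := by
    rw [Real.rpow_natCast]; exact pow_le_pow_right₀ hn1 hv
  have h2 : (n : ℝ) ^ ((-((k : ℝ) - (ℓ : ℝ)) - ε) * j) ≤ p ^ j := by
    rw [Real.rpow_mul hn0.le, Real.rpow_natCast]
    exact pow_le_pow_left₀ (Real.rpow_nonneg hn0.le _) hp j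
  refine le_trans ?_ (mul_le_mul h1 h2 (Real.rpow_nonneg hn0.le _) (by positivity))
  rw [← Real.rpow_add hn0]
  apply Real.rpow_le_rpow_of_exponent_le hn1
  push_cast [Nat.cast_sub hlk]
  rw [le_div_iff₀ (by positivity)] at hε
  have := mul_le_mul_of_nonneg_left hja' hε0.le
  nlinarith

lemma delta_inner {n : ℕ} (k ℓ a x b : ℕ) (hb : b = 2 * x + ℓ + (k - ℓ) * a) (hlk : ℓ < k)
    (hl1 : 1 ≤ ℓ) (ha : 1 ≤ a) {ε p : ℝ} (hε0 : 0 < ε)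
    (hε : ε ≤ (ℓ : ℝ) / (2 * (a : ℝ))) (hn : 1 ≤ n)
    (hp : (n : ℝ) ^ (-((k : ℝ) - (ℓ : ℝ)) - ε) ≤ p)
    (T : Finset (Fin b → Fin n)) (hT : ∀ w ∈ T, Function.Injective w)
    (w : Fin b → Fin n) (hw : w ∈ T) :
    ∑ w' ∈ T with ¬ Disjoint (paxE k ℓ a x w) (paxE k ℓ a x w'),
      p ^ (paxE k ℓ a x w ∪ paxE k ℓ a x w').card
    ≤ 2 ^ a * ((b : ℝ) ^ b * ((n : ℝ) ^ b * p ^ (2 * a) / (n : ℝ) ^ ((1 : ℝ) / 2))) := by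
  have hn1 : (1 : ℝ) ≤ n := by exact_mod_cast hn
  have hn0 : (0 : ℝ) < n := by linarith
  have hp0 : 0 < p := lt_of_lt_of_le (Real.rpow_pos_of_pos hn0 _) hp
  have hb1 : 1 ≤ b := by omega
  set 𝒥 := (Finset.range a).powerset.filter (fun J => J.Nonempty) with h𝒥
  let P : Finset ℕ → (Fin b → Fin n) → Prop := fun J w' =>
    ∀ m ∈ J.biUnion (paxI k ℓ x b), w' m ∈ Finset.univ.image w
  have step1 : ∀ w' ∈ T.filter (fun w' => ¬ Disjoint (paxE k ℓ a x w) (paxE k ℓ a x w')),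
      p ^ (paxE k ℓ a x w ∪ paxE k ℓ a x w').card ≤
        ∑ J ∈ 𝒥, if P J w' then p ^ (2 * a - J.card) else 0 := by
    intro w' hw'
    obtain ⟨hw'T, hnd⟩ := Finset.mem_filter.1 hw'
    set J := (Finset.range a).filter (fun i => (paxI k ℓ x b i).image w' ∈ paxE k ℓ a x w) with hJ
    have hJi : J.image (fun i => (paxI k ℓ x b i).image w') = paxE k ℓ a x w ∩ paxE k ℓ a x w' := by
      ext e
      simp only [hJ, Finset.mem_image, Finset.mem_filter, Finset.mem_inter]
      constructor
      · rintro ⟨i, ⟨hi, h⟩, rfl⟩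
        exact ⟨h, Finset.mem_image_of_mem _ hi⟩
      · rintro ⟨h1, h2⟩
        obtain ⟨i, hi, rfl⟩ := Finset.mem_image.1 h2
        exact ⟨i, ⟨hi, h1⟩, rfl⟩
    have hJc : J.card = (paxE k ℓ a x w ∩ paxE k ℓ a x w').card := by
      rw [← hJi, Finset.card_image_of_injOn]
      exact (paxEdge_inj k ℓ a x b hb hlk w' (hT w' hw'T)).mono (by
        exact_mod_cast Finset.filter_subset _ _)
    have hJne : J.Nonempty := by
      rw [← Finset.card_pos, hJc, Finset.card_pos]
      exact Finset.not_disjoint_iff_nonempty_inter.1 hnd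
    have hJmem : J ∈ 𝒥 := by
      rw [h𝒥, Finset.mem_filter, Finset.mem_powerset]
      exact ⟨Finset.filter_subset _ _, hJne⟩
    have hPJ : P J w' := by
      intro m hm
      obtain ⟨i, hi, hmi⟩ := Finset.mem_biUnion.1 hm
      have h1 := (Finset.mem_filter.1 hi).2
      obtain ⟨i', -, h2⟩ := Finset.mem_image.1 h1
      have h3 : w' m ∈ (paxI k ℓ x b i).image w' := Finset.mem_image_of_mem _ hmi
      rw [← h2] at h3
      exact Finset.image_subset_image (Finset.subset_univ _) h3
    have hcard : (paxE k ℓ a x w ∪ paxE k ℓ a x w').card = 2 * a - J.card := by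
      have := Finset.card_union_add_card_inter (paxE k ℓ a x w) (paxE k ℓ a x w')
      rw [paxE_card k ℓ a x b hb hlk w (hT w hw), paxE_card k ℓ a x b hb hlk w' (hT w' hw'T)] at this
      omega
    have := Finset.single_le_sum (f := fun J => if P J w' then p ^ (2 * a - J.card) else 0)
      (fun J _ => by positivity) hJmem
    simp only [hPJ, if_true] at this
    rw [hcard]
    exact this
  have step2 : ∀ J ∈ 𝒥, ∑ w' : Fin b → Fin n, (if P J w' then p ^ (2 * a - J.card) else 0)
      ≤ (b : ℝ) ^ b * ((n : ℝ) ^ b * p ^ (2 * a) / (n : ℝ) ^ ((1 : ℝ) / 2)) := by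
    intro J hJ
    rw [h𝒥, Finset.mem_filter, Finset.mem_powerset] at hJ
    rw [← Finset.sum_filter, Finset.sum_const, nsmul_eq_mul]
    have hc := count_tuples w (J.biUnion (paxI k ℓ x b)) hb1
    have hv := card_biUnion_edgeIdx k ℓ x hlk.le J hJ.2
    rw [← paxI_biUnion k ℓ a x b hb hlk.le J hJ.1] at hv
    have hvb : (J.biUnion (paxI k ℓ x b)).card ≤ b := by
      simpa using Finset.card_le_univ (J.biUnion (paxI k ℓ x b))
    set v := (J.biUnion (paxI k ℓ x b)).card with hvdef
    have hja : J.card ≤ a := by simpa using Finset.card_le_card hJ.1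
    have hphi := phi_bound hl1 hlk.le ha hε0 hε hn hp hja hv
    have hc' : ((Finset.univ.filter (fun w' => P J w')).card : ℝ) ≤ (b : ℝ) ^ b * (n : ℝ) ^ (b - v) := by
      exact_mod_cast hc
    refine (mul_le_mul_of_nonneg_right hc' (by positivity)).trans ?_
    rw [mul_assoc]
    refine mul_le_mul_of_nonneg_left ?_ (by positivity)
    rw [le_div_iff₀ (Real.rpow_pos_of_pos hn0 _)]
    refine (mul_le_mul_of_nonneg_left hphi (by positivity)).trans (le_of_eq ?_)
    have e1 : (n : ℝ) ^ b = (n : ℝ) ^ (b - v) * (n : ℝ) ^ v := by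
      rw [← pow_add, Nat.sub_add_cancel hvb]
    have e2 : p ^ (2 * a) = p ^ (2 * a - J.card) * p ^ J.card := by
      rw [← pow_add, Nat.sub_add_cancel (by omega)]
    rw [e1, e2]; ring
  calc _ ≤ ∑ w' ∈ T with ¬ Disjoint (paxE k ℓ a x w) (paxE k ℓ a x w'),
        ∑ J ∈ 𝒥, (if P J w' then p ^ (2 * a - J.card) else 0) := Finset.sum_le_sum step1
    _ ≤ ∑ w' : Fin b → Fin n, ∑ J ∈ 𝒥, (if P J w' then p ^ (2 * a - J.card) else 0) :=
        Finset.sum_le_sum_of_subset_of_nonneg (Finset.subset_univ _)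
          (fun _ _ _ => Finset.sum_nonneg fun _ _ => by positivity)
    _ = ∑ J ∈ 𝒥, ∑ w' : Fin b → Fin n, (if P J w' then p ^ (2 * a - J.card) else 0) :=
        Finset.sum_comm
    _ ≤ ∑ J ∈ 𝒥, (b : ℝ) ^ b * ((n : ℝ) ^ b * p ^ (2 * a) / (n : ℝ) ^ ((1 : ℝ) / 2)) :=
        Finset.sum_le_sum step2
    _ ≤ _ := by
        rw [Finset.sum_const, nsmul_eq_mul]
        refine mul_le_mul_of_nonneg_right ?_ (by positivity)
        have : 𝒥.card ≤ 2 ^ a := by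
          refine (Finset.card_filter_le _ _).trans ?_
          simp
        exact_mod_cast this

lemma asym (k : ℕ) (c : ℝ) (hc : 0 < c) : ∃ n₀ : ℕ, ∀ n : ℕ, n₀ ≤ n →
    (n : ℝ) ^ (2 * k) * Real.exp (-(c * (n : ℝ) ^ ((1 : ℝ) / 2)))
      ≤ Real.exp (-((n : ℝ) ^ ((1 : ℝ) / 3))) := by
  have h1 := (isLittleO_log_rpow_atTop (r := 1 / 2) (by norm_num)).def
    (c := c / 2 / (2 * k + 1)) (by positivity)
  have h2 : ∀ᶠ y : ℝ in Filter.atTop, y ^ ((1 : ℝ) / 3) ≤ c / 2 * y ^ ((1 : ℝ) / 2) := by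
    have h4 := (tendsto_rpow_atTop (y := 1 / 6) (by norm_num)).eventually_ge_atTop (2 / c)
    filter_upwards [h4, Filter.eventually_gt_atTop 0] with y hy hy0
    have h5 : y ^ ((1 : ℝ) / 2) = y ^ ((1 : ℝ) / 6) * y ^ ((1 : ℝ) / 3) := by
      rw [← Real.rpow_add hy0]; norm_num
    rw [h5, ← mul_assoc]
    have h6 : 1 ≤ c / 2 * y ^ ((1 : ℝ) / 6) := by
      refine le_trans (le_of_eq ?_) (mul_le_mul_of_nonneg_left hy (by positivity))
      field_simp
    exact le_mul_of_one_le_left (Real.rpow_nonneg hy0.le _) h6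
  have h3 := tendsto_natCast_atTop_atTop (R := ℝ) |>.eventually (h1.and h2)
  obtain ⟨n₀, hn₀⟩ := Filter.eventually_atTop.1 h3
  refine ⟨max n₀ 1, fun n hn => ?_⟩
  obtain ⟨a1, a2⟩ := hn₀ n ((le_max_left _ _).trans hn)
  have hn1 : 1 ≤ n := (le_max_right _ _).trans hn
  have hn0 : (0 : ℝ) < n := by exact_mod_cast hn1
  rw [Real.norm_eq_abs, Real.norm_of_nonneg (Real.rpow_nonneg hn0.le _)] at a1
  have a3 : (2 * k : ℝ) * Real.log n ≤ c / 2 * (n : ℝ) ^ ((1 : ℝ) / 2) := by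
    have a4 := (le_abs_self _).trans a1
    have a5 : 0 ≤ Real.log n := Real.log_nonneg (by exact_mod_cast hn1)
    have : (2 * k + 1 : ℝ) * Real.log n ≤ c / 2 * (n : ℝ) ^ ((1 : ℝ) / 2) := by
      refine (mul_le_mul_of_nonneg_left a4 (by positivity)).trans (le_of_eq ?_)
      field_simp
    linarith
  have : (n : ℝ) ^ (2 * k) = Real.exp ((2 * k : ℝ) * Real.log n) := by
    rw [← Real.exp_log hn0, ← Real.exp_nat_mul, Real.log_exp]; push_cast; ring_nf
  rw [this, ← Real.exp_add, Real.exp_le_exp]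
  linarith

/-- Lemma 2.3. Given at most `n^{2k}` families of `γ n^b` ordered
`b`-subsets each, with probability at least `1 - exp(-n^{1/3})`, in every family at least
`(γ/2) p^a n^b` members span labeled copies of `P_{a,x}`. -/
theorem many_pax_copies_in_each_family
    (k ℓ a x : ℕ) (hk : 3 ≤ k) (hl1 : 1 ≤ ℓ) (hlk : ℓ ≤ k - 1)
    (ha : 1 ≤ a) (hx : x ≤ k)
    (ε : ℝ) (hε0 : 0 < ε) (hε : ε ≤ (ℓ : ℝ) / (2 * (a : ℝ)))
    (γ : ℝ) (hγ : 0 < γ) :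
    ∃ n₀ : ℕ, ∀ n : ℕ, n₀ ≤ n →
      ∀ t : ℕ, t ≤ n ^ (2 * k) →
        ∀ ℱ : Fin t → Finset (Fin (2 * x + ℓ + (k - ℓ) * a) → Fin n),
          (∀ i, (∀ w ∈ ℱ i, Function.Injective w) ∧
            ((ℱ i).card : ℝ) = γ * (n : ℝ) ^ (2 * x + ℓ + (k - ℓ) * a)) →
          ∀ p : ℝ, 0 ≤ p → p ≤ 1 → (n : ℝ) ^ (-((k : ℝ) - (ℓ : ℝ)) - ε) ≤ p →
            1 - Real.exp (-((n : ℝ) ^ ((1 : ℝ) / 3))) ≤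
              gProb n k p (fun E => ∀ i,
                γ / 2 * p ^ a * (n : ℝ) ^ (2 * x + ℓ + (k - ℓ) * a) ≤
                  (((ℱ i).filter (fun w => SpansPax k ℓ a x E w)).card : ℝ)) := by
  have hlk' : ℓ < k := by omega
  set b := 2 * x + ℓ + (k - ℓ) * a with hb
  have hb1 : 1 ≤ b := by omega
  have hb0 : (0 : ℝ) < b := by exact_mod_cast hb1
  set c : ℝ := γ / (8 * (2 ^ a * (b : ℝ) ^ b)) with hc
  have hc0 : 0 < c := by positivity
  obtain ⟨n₀, hn₀⟩ := asym k c hc0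
  refine ⟨max n₀ 1, fun n hn t ht ℱ hℱ p hp0 hp1 hp => ?_⟩
  have hn1 : 1 ≤ n := (le_max_right _ _).trans hn
  have hnpos : (0 : ℝ) < n := by exact_mod_cast hn1
  have hasym := hn₀ n ((le_max_left _ _).trans hn)
  have hppos : 0 < p := lt_of_lt_of_le (Real.rpow_pos_of_pos hnpos _) hp
  set μ : ℝ := γ * p ^ a * (n : ℝ) ^ b with hμ
  have hsq : 0 < (n : ℝ) ^ ((1 : ℝ) / 2) := Real.rpow_pos_of_pos hnpos _
  have htail : ∀ i, jEx (kSets n k) p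
      (fun E => if jX (ℱ i) (paxE k ℓ a x) E < μ / 2 then 1 else 0)
      ≤ Real.exp (-(c * (n : ℝ) ^ ((1 : ℝ) / 2))) := by
    intro i
    obtain ⟨hinj, hcard⟩ := hℱ i
    set Δ : ℝ := ((ℱ i).card : ℝ) *
      (2 ^ a * ((b : ℝ) ^ b * ((n : ℝ) ^ b * p ^ (2 * a) / (n : ℝ) ^ ((1 : ℝ) / 2)))) with hΔ
    have hΔ0 : 0 < Δ := by rw [hΔ, hcard]; positivity
    have h := janson_tail (kSets n k) hp0 hp1 (ℱ i) (paxE k ℓ a x)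
      (fun w hw => paxE_subset k ℓ a x b hb hlk' w (hinj w hw)) μ Δ
      (by
        rw [Finset.sum_congr rfl (fun w hw => by
          rw [paxE_card k ℓ a x b hb hlk' w (hinj w hw)]), Finset.sum_const, nsmul_eq_mul, hcard]
        ring)
      (by
        refine (Finset.sum_le_sum fun w hw => delta_inner k ℓ a x b hb hlk' hl1 ha hε0 hε hn1 hp
          (ℱ i) hinj w hw).trans ?_
        rw [Finset.sum_const, nsmul_eq_mul]) hΔ0
    refine h.trans (Real.exp_le_exp.2 (le_of_eq ?_))
    rw [hΔ, hcard, hμ, hc]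
    field_simp
    try ring
  have hgood : gProb n k p (fun E => ∀ i, γ / 2 * p ^ a * (n : ℝ) ^ b ≤
      (((ℱ i).filter (fun w => SpansPax k ℓ a x E w)).card : ℝ))
      = jEx (kSets n k) p (fun E => if ∀ i, γ / 2 * p ^ a * (n : ℝ) ^ b ≤
      (((ℱ i).filter (fun w => SpansPax k ℓ a x E w)).card : ℝ) then 1 else 0) := by
    unfold gProb jEx
    rw [Finset.sum_filter]
    refine Finset.sum_congr rfl fun E _ => ?_
    by_cases hE : ∀ i, γ / 2 * p ^ a * (n : ℝ) ^ b ≤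
      (((ℱ i).filter (fun w => SpansPax k ℓ a x E w)).card : ℝ)
    · rw [if_pos hE]; beta_reduce; rw [if_pos hE, mul_one]
    · rw [if_neg hE]; beta_reduce; rw [if_neg hE, mul_zero]
  have hX : ∀ i E, (((ℱ i).filter (fun w => SpansPax k ℓ a x E w)).card : ℝ)
      = jX (ℱ i) (paxE k ℓ a x) E := by
    intro i E
    unfold jX
    rw [Finset.sum_boole]
    congr 2
    refine Finset.filter_congr fun w hw => spansPax_iff k ℓ a x b E w ((hℱ i).1 w hw)
  rw [hgood]
  have hlow : jEx (kSets n k) p (fun E => 1 - ∑ i : Fin t,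
      if jX (ℱ i) (paxE k ℓ a x) E < μ / 2 then 1 else 0) ≤
      jEx (kSets n k) p (fun E => if ∀ i, γ / 2 * p ^ a * (n : ℝ) ^ b ≤
      (((ℱ i).filter (fun w => SpansPax k ℓ a x E w)).card : ℝ) then 1 else 0) := by
    refine jEx_mono _ hp0 hp1 fun E => ?_
    have hnn : ∀ i ∈ (Finset.univ : Finset (Fin t)),
        (0 : ℝ) ≤ if jX (ℱ i) (paxE k ℓ a x) E < μ / 2 then 1 else 0 := by
      intro i _; split_ifs <;> norm_num
    split_ifs with hall
    · linarith [Finset.sum_nonneg hnn]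
    · push Not at hall
      obtain ⟨i, hi⟩ := hall
      rw [hX] at hi
      have h1 : jX (ℱ i) (paxE k ℓ a x) E < μ / 2 := by
        rw [hμ]; linarith
      have := Finset.single_le_sum hnn (Finset.mem_univ i)
      rw [if_pos h1] at this
      linarith
  refine le_trans ?_ hlow
  rw [jEx_sub, jEx_one, jEx_sum]
  have hs : ∑ i : Fin t, jEx (kSets n k) p
      (fun E => if jX (ℱ i) (paxE k ℓ a x) E < μ / 2 then 1 else 0)
      ≤ Real.exp (-((n : ℝ) ^ ((1 : ℝ) / 3))) := by
    refine (Finset.sum_le_sum fun i _ => htail i).trans (le_trans ?_ hasym)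
    rw [Finset.sum_const, nsmul_eq_mul, Finset.card_univ, Fintype.card_fin]
    refine mul_le_mul_of_nonneg_right ?_ (Real.exp_pos _).le
    exact_mod_cast ht
  linarith
end

section
/- Let k ≥ 3 and 1 ≤ ℓ ≤ k−1 be integers and let 0 < η ≤ α, 1/k. Let H be an n-vertex k-graph with δ₁(H) ≥ α·n^{k−1}. Then there exists a spanning subgraph H′ of H satisfying: (1) e(H′) ≥ α·n^k/(2k); (2) deg_{H′}(v) ≥ (2α/3)·n^{k−1} for all but at most 3kη²n/α vertices v of H; and (3) for every ℓ-set S of vertices, either deg_{H′}(S) = 0 or deg_{H′}(S) ≥ η²·n^{k−ℓ}. -/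
open Finset
open scoped Classical

lemma shave_aux {n : ℕ} (ℓ : ℕ) (t : ℝ) (H : Finset (Finset (Fin n))) :
    ∃ G ⊆ H, ((H.card : ℝ) - G.card ≤ t * (n.choose ℓ : ℝ) ∨ t < 0) ∧
      ∀ S : Finset (Fin n), S.card = ℓ → degOf G S = 0 ∨ t ≤ (degOf G S : ℝ) := by
  by_cases ht : t < 0
  · exact ⟨H, Subset.refl _, Or.inr ht, fun S _ => Or.inr (ht.le.trans (Nat.cast_nonneg _))⟩
  push Not at ht
  let Z : Finset (Finset (Fin n)) → Finset (Finset (Fin n)) := fun G =>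
    (Finset.univ.powersetCard ℓ).filter (fun S => degOf G S = 0)
  let F := H.powerset.filter (fun G => (H.card : ℝ) - G.card ≤ t * ((Z G).card : ℝ))
  have hF : F.Nonempty := ⟨H, by
    simp only [F, mem_filter, mem_powerset, Subset.refl, true_and, sub_self]
    positivity⟩
  obtain ⟨G, hG, hmin⟩ := F.exists_min_image (fun G => G.card) hF
  simp only [F, mem_filter, mem_powerset] at hG
  refine ⟨G, hG.1, Or.inl (hG.2.trans ?_), ?_⟩
  · apply mul_le_mul_of_nonneg_left _ ht
    have h1 : (Z G).card ≤ (Finset.univ.powersetCard ℓ : Finset (Finset (Fin n))).card :=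
      card_filter_le _ _
    rw [card_powersetCard, card_univ, Fintype.card_fin] at h1
    exact_mod_cast h1
  · intro S hS
    by_contra! hcon
    obtain ⟨h0, hlt⟩ := hcon
    let G' := G.filter (fun e => ¬ S ⊆ e)
    have hcard : degOf G S + G'.card = G.card :=
      card_filter_add_card_filter_not (fun e => S ⊆ e)
    have hZ : (Z G).card + 1 ≤ (Z G').card := by
      have hnot : S ∉ Z G := by simp [Z, h0]
      rw [← card_insert_of_notMem hnot]
      apply card_le_card
      intro T hT
      rw [mem_insert] at hT
      rcases hT with rfl | hT
      · simp [Z, hS, degOf, G', filter_filter]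
      · simp only [Z, mem_filter] at hT ⊢
        refine ⟨hT.1, ?_⟩
        have := card_le_card (filter_subset_filter (fun e => T ⊆ e)
          (filter_subset (fun e => ¬ S ⊆ e) G))
        have h2 := hT.2
        unfold degOf at h2 ⊢
        exact Nat.le_zero.mp (this.trans h2.le)
    have hmem : G' ∈ F := by
      simp only [F, mem_filter, mem_powerset]
      refine ⟨(filter_subset _ _).trans hG.1, ?_⟩
      have hc : (degOf G S : ℝ) + G'.card = G.card := by exact_mod_cast hcard
      have hz : ((Z G).card : ℝ) + 1 ≤ (Z G').card := by exact_mod_cast hZ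
      nlinarith [hG.2, mul_le_mul_of_nonneg_left hz ht]
    have := hmin G' hmem
    omega

lemma sum_deg {n k : ℕ} (E : Finset (Finset (Fin n))) (hE : E ⊆ kSets n k) :
    ∑ v : Fin n, degOf E {v} = k * E.card := by
  unfold degOf
  simp only [card_filter, singleton_subset_iff]
  rw [sum_comm]
  have : ∀ e ∈ E, (∑ v : Fin n, if v ∈ e then 1 else 0) = k := by
    intro e he
    have h := hE he
    rw [kSets, mem_powersetCard] at h
    rw [← card_filter]
    simpa using h.2
  rw [sum_congr rfl this, sum_const, smul_eq_mul, mul_comm]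

/-- Lemma 3.1, the shaving lemma. Every `k`-graph `H` with
`δ₁(H) ≥ α n^{k-1}` has a spanning subgraph `H'` with `e(H') ≥ α n^k/(2k)`, in which all
but at most `3kη²n/α` vertices keep degree at least `(2α/3) n^{k-1}`, and in which every
`ℓ`-set has degree `0` or at least `η² n^{k-ℓ}`. -/
theorem shaving_lemma
    (k ℓ n : ℕ) (hk : 3 ≤ k) (hl1 : 1 ≤ ℓ) (hlk : ℓ ≤ k - 1)
    (α η : ℝ) (hη0 : 0 < η) (hηα : η ≤ α) (hηk : η ≤ 1 / (k : ℝ))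
    (H : Finset (Finset (Fin n))) (hH : H ⊆ kSets n k)
    (hdeg : ∀ v : Fin n, α * (n : ℝ) ^ (k - 1) ≤ (degOf H {v} : ℝ)) :
    ∃ H' : Finset (Finset (Fin n)), H' ⊆ H ∧
      α * (n : ℝ) ^ k / (2 * (k : ℝ)) ≤ (H'.card : ℝ) ∧
      ((Finset.univ.filter (fun v : Fin n =>
          (degOf H' {v} : ℝ) < 2 * α / 3 * (n : ℝ) ^ (k - 1))).card : ℝ)
        ≤ 3 * (k : ℝ) * η ^ 2 * (n : ℝ) / α ∧
      ∀ S : Finset (Fin n), S.card = ℓ →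
        degOf H' S = 0 ∨ η ^ 2 * (n : ℝ) ^ (k - ℓ) ≤ (degOf H' S : ℝ) := by
  have hα : 0 < α := hη0.trans_le hηα
  have hk0 : (0 : ℝ) < k := by positivity
  have hηkk : η * k ≤ 1 := by rwa [le_div_iff₀ hk0] at hηk
  have hk3 : (3 : ℝ) ≤ k := by exact_mod_cast hk
  have hη1 : η ≤ 1 := by nlinarith
  have key : ∃ G ⊆ H, (H.card : ℝ) - G.card ≤ η ^ 2 * (n : ℝ) ^ k / 2 ∧
      ∀ S : Finset (Fin n), S.card = ℓ →
        degOf G S = 0 ∨ η ^ 2 * (n : ℝ) ^ (k - ℓ) ≤ (degOf G S : ℝ) := by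
    rcases hl1.eq_or_lt with h1 | h2
    · subst h1
      refine ⟨H, Subset.refl _, by rw [sub_self]; positivity, fun S hS => Or.inr ?_⟩
      obtain ⟨v, rfl⟩ := card_eq_one.mp hS
      refine le_trans ?_ (hdeg v)
      apply mul_le_mul_of_nonneg_right _ (by positivity)
      nlinarith
    · obtain ⟨G, hG, hc, hS⟩ := shave_aux ℓ (η ^ 2 * (n : ℝ) ^ (k - ℓ)) H
      refine ⟨G, hG, ?_, hS⟩
      rcases hc with hc | hc
      · refine hc.trans ?_
        have hch : (n.choose ℓ : ℝ) ≤ (n : ℝ) ^ ℓ / 2 := by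
          refine (Nat.choose_le_pow_div ℓ n).trans ?_
          apply div_le_div_of_nonneg_left (by positivity) (by norm_num)
          have : 2 ≤ ℓ.factorial := by
            have := Nat.self_le_factorial ℓ
            omega
          exact_mod_cast this
        have hp : (n : ℝ) ^ k = (n : ℝ) ^ (k - ℓ) * (n : ℝ) ^ ℓ := by
          rw [← pow_add]; congr 1; omega
        calc _ ≤ η ^ 2 * (n : ℝ) ^ (k - ℓ) * ((n : ℝ) ^ ℓ / 2) :=
              mul_le_mul_of_nonneg_left hch (by positivity)
          _ = _ := by rw [hp]; ring
      · exact absurd hc (not_lt.mpr (by positivity))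
  obtain ⟨G, hG, hc, hS⟩ := key
  have hnk : (n : ℝ) ^ k = n * (n : ℝ) ^ (k - 1) := by
    rw [← pow_succ']; congr 1; omega
  have sH : ∑ v : Fin n, (degOf H {v} : ℝ) = k * H.card := by exact_mod_cast sum_deg H hH
  have sG : ∑ v : Fin n, (degOf G {v} : ℝ) = k * G.card := by
    exact_mod_cast sum_deg G (hG.trans hH)
  refine ⟨G, hG, ?_, ?_, hS⟩
  · have h1 : α * (n : ℝ) ^ k ≤ k * H.card := by
      rw [← sH]
      have := Finset.sum_le_sum (fun v (_ : v ∈ (Finset.univ : Finset (Fin n))) => hdeg v)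
      rw [sum_const, card_univ, Fintype.card_fin, nsmul_eq_mul] at this
      refine le_trans (le_of_eq ?_) this
      rw [hnk]; ring
    have h2 : k * η ^ 2 ≤ α := by nlinarith
    have h3 : k * η ^ 2 * (n : ℝ) ^ k ≤ α * (n : ℝ) ^ k :=
      mul_le_mul_of_nonneg_right h2 (by positivity)
    rw [div_le_iff₀ (by positivity)]
    nlinarith [mul_le_mul_of_nonneg_left hc hk0.le]
  · rcases Nat.eq_zero_or_pos n with hn | hn
    · subst hn
      simp
    have hn' : (0 : ℝ) < n := by exact_mod_cast hn
    have hmono : ∀ v : Fin n, (degOf G {v} : ℝ) ≤ degOf H {v} := fun v => by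
      have := card_le_card (filter_subset_filter (fun e => ({v} : Finset (Fin n)) ⊆ e) hG)
      exact_mod_cast this
    set B := Finset.univ.filter (fun v : Fin n =>
          (degOf G {v} : ℝ) < 2 * α / 3 * (n : ℝ) ^ (k - 1)) with hB
    have h1 : (B.card : ℝ) * (α / 3 * (n : ℝ) ^ (k - 1)) ≤
        ∑ v : Fin n, ((degOf H {v} : ℝ) - degOf G {v}) := by
      rw [← nsmul_eq_mul, ← sum_const]
      refine (Finset.sum_le_sum (g := fun v => (degOf H {v} : ℝ) - degOf G {v}) ?_).trans
        (Finset.sum_le_sum_of_subset_of_nonneg (subset_univ _)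
          (fun v _ _ => sub_nonneg.mpr (hmono v)))
      intro v hv
      have hv' := (mem_filter.mp hv).2
      have := hdeg v
      linarith
    rw [sum_sub_distrib, sH, sG, ← mul_sub] at h1
    have h2 := h1.trans (mul_le_mul_of_nonneg_left hc hk0.le)
    rw [hnk] at h2
    have hP : (0 : ℝ) < (n : ℝ) ^ (k - 1) := by positivity
    have h3 : (B.card : ℝ) * (α / 3) ≤ k * (η ^ 2 * n / 2) := by
      refine le_of_mul_le_mul_right ?_ hP
      linarith
    rw [le_div_iff₀ hα]
    have : 0 ≤ k * (η ^ 2 * n) := by positivity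
    linarith
end
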